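/- Let Φ be an irreducible crystallographic root system of rank n with affine Weyl group W. If W = ⟨s_{α_1,l_1},…,s_{α_{n−1},l_{n−1}}, s_{α_n,l_n}, s_{α_n,l_{n+1}}⟩ for roots α_1,…,α_n ∈ Φ and integers l_1,…,l_{n+1} ∈ ℤ, then |l_{n+1} − l_n| = 1, and if Φ is not simply-laced then α_n is a long root. -/

import Mathlib

open scoped RealInnerProductSpace

noncomputable section

variable {V : Type*} [NormedAddCommGroup V] [InnerProductSpace ℝ V]

/-- The coroot `α^∨ = 2α/(α|α)` of a vector `α`. -/
def coroot (α : V) : V := (2 / ⟪α, α⟫) • α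

/-- The affine reflection `s_{α,k} : v ↦ v - ((v|α) - k)α^∨`, as a function. -/
def sAffFun (α : V) (k : ℝ) (v : V) : V := v - (⟪v, α⟫ - k) • coroot α

theorem sAffFun_involutive (α : V) (k : ℝ) : Function.Involutive (sAffFun α k) := by
  intro v
  by_cases h : α = 0
  · simp [sAffFun, coroot, h]
  · have h2 : ⟪α, α⟫ ≠ 0 := by
      intro hz
      exact h (inner_self_eq_zero.mp hz)
    have hr : ⟪coroot α, α⟫ = 2 := by
      simp only [coroot, real_inner_smul_left]
      field_simp
    simp only [sAffFun, inner_sub_left, real_inner_smul_left, hr]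
    have : ⟪v, α⟫ - (⟪v, α⟫ - k) * 2 - k = -(⟪v, α⟫ - k) := by ring
    rw [this, neg_smul, sub_neg_eq_add, sub_add_cancel]

/-- The affine reflection `s_{α,k}` as a permutation of `V`. -/
def sAff (α : V) (k : ℝ) : Equiv.Perm V :=
  Function.Involutive.toPerm _ (sAffFun_involutive α k)

/-- The translation `Tr(x) : v ↦ v + x`, as a function. -/
def trFun (x : V) (v : V) : V := v + x

/-- The translation `Tr(x) : v ↦ v + x`, as a permutation of `V`. -/
def trPerm (x : V) : Equiv.Perm V := Equiv.addRight x

/-- A crystallographic (reduced) root system in a Euclidean space `V`. -/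
structure IsCrystRootSystem (Φ : Set V) : Prop where
  finite : Φ.Finite
  nonempty : Φ.Nonempty
  ne_zero : ∀ α ∈ Φ, α ≠ 0
  spanning : Submodule.span ℝ Φ = ⊤
  refl_mem : ∀ α ∈ Φ, ∀ β ∈ Φ, sAffFun α 0 β ∈ Φ
  reduced : ∀ α ∈ Φ, ∀ c : ℝ, c • α ∈ Φ → c = 1 ∨ c = -1
  cryst : ∀ α ∈ Φ, ∀ β ∈ Φ, ∃ n : ℤ, 2 * ⟪β, α⟫ / ⟪α, α⟫ = (n : ℝ)

/-- The (finite) Weyl group of `Φ`, generated by the reflections `s_α`. -/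
def WeylGroup (Φ : Set V) : Subgroup (Equiv.Perm V) :=
  Subgroup.closure {g | ∃ α ∈ Φ, g = sAff α 0}

/-- The affine Weyl group of `Φ`, generated by all affine reflections `s_{α,k}`, `k ∈ ℤ`. -/
def AffWeylGroup (Φ : Set V) : Subgroup (Equiv.Perm V) :=
  Subgroup.closure {g | ∃ α ∈ Φ, ∃ k : ℤ, g = sAff α k}

/-- The set of reflections of the affine Weyl group. -/
def AffReflections (Φ : Set V) : Set (Equiv.Perm V) :=
  {g | ∃ α ∈ Φ, ∃ k : ℤ, g = sAff α k}

/-- The coweight lattice `P(Φ^∨) = {x | (x|α) ∈ ℤ for all α ∈ Φ}`. -/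
def coweightLattice (Φ : Set V) : Set V :=
  {x | ∀ α ∈ Φ, ∃ n : ℤ, ⟪x, α⟫ = (n : ℝ)}

/-- `Φ` is irreducible: it admits no decomposition into two nonempty orthogonal parts. -/
def IsIrreducibleRS (Φ : Set V) : Prop :=
  ∀ Φ₁ Φ₂ : Set V, Φ₁ ∪ Φ₂ = Φ → (∀ α ∈ Φ₁, ∀ β ∈ Φ₂, ⟪α, β⟫ = 0) →
    Φ₁ = ∅ ∨ Φ₂ = ∅

theorem sAffFun_coroot_image (α γ : V) (hα : α ≠ 0) :
    coroot γ - ⟪coroot γ, α⟫ • coroot α = coroot (sAffFun α 0 γ) ∧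
    ⟪sAffFun α 0 γ, sAffFun α 0 γ⟫ = ⟪γ, γ⟫ := by
  have h2 : ⟪α, α⟫ ≠ 0 := fun hz => hα (inner_self_eq_zero.mp hz)
  have hn : ⟪sAffFun α 0 γ, sAffFun α 0 γ⟫ = ⟪γ, γ⟫ := by
    simp only [sAffFun, coroot, inner_sub_left, inner_sub_right, real_inner_smul_left,
      real_inner_smul_right, real_inner_comm γ α, sub_zero]
    field_simp
    ring
  refine ⟨?_, hn⟩
  rw [coroot.eq_def (sAffFun α 0 γ), hn]
  simp only [sAffFun, coroot, real_inner_smul_left, sub_zero, smul_sub, smul_smul]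
  congr 2
  ring

/-- The lattice spanned by the coroots of roots of squared length `c`. -/
def latL (Φ : Set V) (c : ℝ) : AddSubgroup V :=
  AddSubgroup.closure {x | ∃ γ ∈ Φ, ⟪γ, γ⟫ = c ∧ x = coroot γ}

theorem latL_pair (Φ : Set V) (hΦ : IsCrystRootSystem Φ) (c : ℝ) (x : V) (hx : x ∈ latL Φ c)
    (β : V) (hβ : β ∈ Φ) : ∃ z : ℤ, ⟪x, β⟫ = (z : ℝ) := by
  induction hx using AddSubgroup.closure_induction with
  | mem x hx =>
    obtain ⟨γ, hγ, -, rfl⟩ := hx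
    obtain ⟨z, hz⟩ := hΦ.cryst γ hγ β hβ
    refine ⟨z, ?_⟩
    rw [← hz, coroot, real_inner_smul_left, real_inner_comm γ β]
    ring
  | zero => exact ⟨0, by simp⟩
  | add x y _ _ h1 h2 =>
    obtain ⟨z1, h1⟩ := h1
    obtain ⟨z2, h2⟩ := h2
    exact ⟨z1 + z2, by rw [inner_add_left, h1, h2]; push_cast; ring⟩
  | neg x _ h =>
    obtain ⟨z, h⟩ := h
    exact ⟨-z, by rw [inner_neg_left, h]; push_cast; ring⟩

theorem latL_refl (Φ : Set V) (hΦ : IsCrystRootSystem Φ) (c : ℝ) (x : V) (hx : x ∈ latL Φ c)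
    (β : V) (hβ : β ∈ Φ) : x - ⟪x, β⟫ • coroot β ∈ latL Φ c := by
  induction hx using AddSubgroup.closure_induction with
  | mem x hx =>
    obtain ⟨γ, hγ, hc, rfl⟩ := hx
    obtain ⟨h1, h2⟩ := sAffFun_coroot_image β γ (hΦ.ne_zero β hβ)
    rw [h1]
    exact AddSubgroup.subset_closure ⟨_, hΦ.refl_mem β hβ γ hγ, h2.trans hc, rfl⟩
  | zero => simp
  | add x y _ _ h1 h2 =>
    have := add_mem h1 h2
    rw [inner_add_left, add_smul]
    convert this using 1
    abel
  | neg x _ h =>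
    have := neg_mem h
    rw [inner_neg_left, neg_smul]
    convert this using 1
    abel

theorem latL_pair2 (Φ : Set V) (hΦ : IsCrystRootSystem Φ) (c : ℝ) (x : V) (hx : x ∈ latL Φ c)
    (y : V) (hy : y ∈ latL Φ c) : ∃ z : ℤ, ⟪x, y⟫ = 2 / c * (z : ℝ) := by
  induction hy using AddSubgroup.closure_induction with
  | mem y hy =>
    obtain ⟨γ, hγ, hc, rfl⟩ := hy
    obtain ⟨z, hz⟩ := latL_pair Φ hΦ c x hx γ hγ
    exact ⟨z, by rw [coroot, real_inner_smul_right, hz, hc]⟩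
  | zero => exact ⟨0, by simp⟩
  | add x y _ _ h1 h2 =>
    obtain ⟨z1, h1⟩ := h1
    obtain ⟨z2, h2⟩ := h2
    exact ⟨z1 + z2, by rw [inner_add_right, h1, h2]; push_cast; ring⟩
  | neg x _ h =>
    obtain ⟨z, h⟩ := h
    exact ⟨-z, by rw [inner_neg_right, h]; push_cast; ring⟩

theorem latL_norm (Φ : Set V) (hΦ : IsCrystRootSystem Φ) (c : ℝ) (x : V) (hx : x ∈ latL Φ c) :
    ∃ z : ℤ, ⟪x, x⟫ = 4 / c * (z : ℝ) := by
  induction hx using AddSubgroup.closure_induction with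
  | mem y hy =>
    obtain ⟨γ, hγ, hc, rfl⟩ := hy
    have h2 : ⟪γ, γ⟫ ≠ 0 := fun hz => hΦ.ne_zero γ hγ (inner_self_eq_zero.mp hz)
    refine ⟨1, ?_⟩
    rw [← hc, coroot, real_inner_smul_right, real_inner_smul_left]
    field_simp
    norm_num
  | zero => exact ⟨0, by simp⟩
  | add x y hx hy h1 h2 =>
    obtain ⟨z1, h1⟩ := h1
    obtain ⟨z2, h2⟩ := h2
    obtain ⟨z3, h3⟩ := latL_pair2 Φ hΦ c x hx y hy
    refine ⟨z1 + z2 + z3, ?_⟩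
    rw [inner_add_right, inner_add_left, inner_add_left, h1, h2, real_inner_comm x y, h3]
    push_cast
    ring
  | neg x _ h =>
    obtain ⟨z, h⟩ := h
    exact ⟨z, by rw [inner_neg_right, inner_neg_left, neg_neg, h]⟩

theorem sAff_apply' (α : V) (k : ℝ) (v : V) :
    sAff α k v = v - (⟪v, α⟫ - k) • coroot α := rfl

theorem closure_preserves (T : Set (Equiv.Perm V)) (S : Set V)
    (h : ∀ g ∈ T, (∀ v, g (g v) = v) ∧ ∀ v ∈ S, g v ∈ S)
    (g : Equiv.Perm V) (hg : g ∈ Subgroup.closure T) : ∀ v, g v ∈ S ↔ v ∈ S := by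
  induction hg using Subgroup.closure_induction with
  | mem g hg =>
    intro v
    refine ⟨fun hv => ?_, (h g hg).2 v⟩
    have := (h g hg).2 _ hv
    rwa [(h g hg).1] at this
  | one => intro v; rfl
  | mul a b _ _ ha hb => intro v; rw [Equiv.Perm.mul_apply, ha, hb]
  | inv a _ ha =>
    intro v
    rw [← ha (a⁻¹ v)]
    exact iff_of_eq (congrArg (· ∈ S) (a.apply_symm_apply v))

theorem closure_commutes (T : Set (Equiv.Perm V)) (x : V)
    (h : ∀ g ∈ T, ∀ v, g (v + x) = g v + x)
    (g : Equiv.Perm V) (hg : g ∈ Subgroup.closure T) : ∀ v, g (v + x) = g v + x := by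
  induction hg using Subgroup.closure_induction with
  | mem g hg => exact h g hg
  | one => intro v; rfl
  | mul a b _ _ ha hb => intro v; rw [Equiv.Perm.mul_apply, hb, ha]; rfl
  | inv a _ ha =>
    intro v
    rw [Equiv.Perm.inv_eq_iff_eq, ha]
    exact congrArg (· + x) (a.apply_symm_apply v).symm

theorem main_lattice (Φ : Set V) (hΦ : IsCrystRootSystem Φ)
    (n : ℕ) (hn : 0 < n) (hrank : Module.finrank ℝ V = n)
    (α : Fin n → V) (hα : ∀ i, α i ∈ Φ) (l : Fin n → ℤ) (l' : ℤ) (j : Fin n)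
    (hgen : AffWeylGroup Φ = Subgroup.closure
      ((Set.range fun i => sAff (α i) (l i : ℝ)) ∪ {sAff (α j) (l' : ℝ)}))
    (β : V) (hβ : β ∈ Φ) :
    ∃ y ∈ latL Φ ⟪α j, α j⟫, coroot β = ((l' - l j : ℤ) : ℝ) • y := by
  have hfd : FiniteDimensional ℝ V := FiniteDimensional.of_finrank_pos (by omega)
  have hW : ∀ β ∈ Φ, ∀ k : ℤ, sAff β (k : ℝ) ∈ AffWeylGroup Φ := fun β hβ k =>
    Subgroup.subset_closure ⟨β, hβ, k, rfl⟩
  -- the point p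
  obtain ⟨p, hp⟩ : ∃ p : V, ∀ i, ⟪p, α i⟫ = (l i : ℝ) := by
    let f : V →ₗ[ℝ] (Fin n → ℝ) := LinearMap.pi fun i => (innerₗ V (α i))
    have hf : ∀ v i, f v i = ⟪v, α i⟫ := fun v i => by
      simp [f, real_inner_comm]
    have hinj : Function.Injective f := by
      rw [injective_iff_map_eq_zero]
      intro x hx
      have hx' : ∀ i, ⟪x, α i⟫ = 0 := fun i => by rw [← hf, hx]; rfl
      have hcom : ∀ g ∈ AffWeylGroup Φ, ∀ v, g (v + x) = g v + x := by
        rw [hgen]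
        apply closure_commutes
        rintro g (⟨i, rfl⟩ | rfl) v
        · simp only [sAff_apply', inner_add_left, hx', add_zero]; abel
        · simp only [sAff_apply', inner_add_left, hx', add_zero]; abel
      have hΦx : ∀ γ ∈ Φ, ⟪x, γ⟫ = 0 := by
        intro γ hγ
        have h2 : ⟪γ, γ⟫ ≠ 0 := fun hz => hΦ.ne_zero γ hγ (inner_self_eq_zero.mp hz)
        have := hcom _ (hW γ hγ 0) 0
        simp only [sAff_apply', coroot, zero_add, inner_zero_left, Int.cast_zero, sub_zero,
          smul_smul] at this
        simpa [hΦ.ne_zero γ hγ] using this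
      have : ∀ y ∈ Submodule.span ℝ Φ, ⟪x, y⟫ = 0 := by
        intro y hy
        induction hy using Submodule.span_induction with
        | mem y hy => exact hΦx y hy
        | zero => simp
        | add a b _ _ ha hb => rw [inner_add_right, ha, hb, add_zero]
        | smul r a _ ha => rw [real_inner_smul_right, ha, mul_zero]
      exact inner_self_eq_zero.mp (this x (by rw [hΦ.spanning]; trivial))
    have hsurj : Function.Surjective f :=
      (LinearMap.injective_iff_surjective_of_finrank_eq_finrank (by simp [hrank])).mp hinj
    obtain ⟨p, hp⟩ := hsurj (fun i => (l i : ℝ))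
    exact ⟨p, fun i => by rw [← hf, hp]⟩
  set c := ⟪α j, α j⟫ with hc
  set m : ℝ := ((l' - l j : ℤ) : ℝ) with hm
  let S : Set V := {v | ∃ y ∈ latL Φ c, v = p + m • y}
  have hcor : coroot (α j) ∈ latL Φ c := AddSubgroup.subset_closure ⟨_, hα j, rfl, rfl⟩
  have hpres : ∀ g ∈ AffWeylGroup Φ, ∀ v, g v ∈ S ↔ v ∈ S := by
    rw [hgen]
    apply closure_preserves
    rintro g (⟨i, rfl⟩ | rfl)
    · refine ⟨fun v => sAffFun_involutive _ _ v, ?_⟩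
      rintro v ⟨y, hy, rfl⟩
      refine ⟨_, latL_refl Φ hΦ c y hy (α i) (hα i), ?_⟩
      simp only [sAff_apply', inner_add_left, hp, real_inner_smul_left]
      module
    · refine ⟨fun v => sAffFun_involutive _ _ v, ?_⟩
      rintro v ⟨y, hy, rfl⟩
      refine ⟨_, add_mem (latL_refl Φ hΦ c y hy (α j) (hα j)) hcor, ?_⟩
      simp only [sAff_apply', inner_add_left, hp, real_inner_smul_left]
      have : (l' : ℝ) = m + l j := by rw [hm]; push_cast; ring
      rw [this]
      module
  have hpS : p ∈ S := ⟨0, zero_mem _, by simp⟩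
  have h1 := (hpres _ (mul_mem (hW β hβ 1) (hW β hβ 0)) p).mpr hpS
  obtain ⟨y, hy, h⟩ := h1
  refine ⟨y, hy, ?_⟩
  have h2 : ⟪β, β⟫ ≠ 0 := fun hz => hΦ.ne_zero β hβ (inner_self_eq_zero.mp hz)
  have hr : ⟪coroot β, β⟫ = 2 := by
    simp only [coroot, real_inner_smul_left]
    field_simp
  simp only [Equiv.Perm.mul_apply, sAff_apply', inner_sub_left, real_inner_smul_left, hr] at h
  have h3 : m • y = (p + m • y) - p := by abel
  rw [h3, ← h]
  push_cast
  module

theorem statement_17 (Φ : Set V) (hΦ : IsCrystRootSystem Φ) (hirr : IsIrreducibleRS Φ)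
    (n : ℕ) (hn : 0 < n) (hrank : Module.finrank ℝ V = n)
    (α : Fin n → V) (hα : ∀ i, α i ∈ Φ) (l : Fin n → ℤ) (l' : ℤ)
    (hgen : AffWeylGroup Φ = Subgroup.closure
      ((Set.range fun i => sAff (α i) (l i : ℝ)) ∪ {sAff (α ⟨n - 1, by omega⟩) (l' : ℝ)})) :
    |l' - l ⟨n - 1, by omega⟩| = 1 ∧
    (∀ a b : ℝ, a < b → (∀ γ ∈ Φ, ⟪γ, γ⟫ = a ∨ ⟪γ, γ⟫ = b) →
      (∃ γ ∈ Φ, ⟪γ, γ⟫ = a) → (∃ γ ∈ Φ, ⟪γ, γ⟫ = b) →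
      ⟪α ⟨n - 1, by omega⟩, α ⟨n - 1, by omega⟩⟫ = b) := by
  have key := main_lattice Φ hΦ n hn hrank α hα l l' _ hgen
  set j : Fin n := ⟨n - 1, by omega⟩ with hj
  have hj2 : ⟪α j, α j⟫ ≠ 0 := fun hz => hΦ.ne_zero _ (hα j) (inner_self_eq_zero.mp hz)
  constructor
  · have hdiv : ∀ x ∈ latL Φ ⟪α j, α j⟫, ∃ y ∈ latL Φ ⟪α j, α j⟫,
        x = ((l' - l j : ℤ) : ℝ) • y := by
      intro x hx
      induction hx using AddSubgroup.closure_induction with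
      | mem x hx =>
        obtain ⟨γ, hγ, -, rfl⟩ := hx
        exact key γ hγ
      | zero => exact ⟨0, zero_mem _, by simp⟩
      | add x y _ _ h1 h2 =>
        obtain ⟨u, hu, rfl⟩ := h1
        obtain ⟨v, hv, rfl⟩ := h2
        exact ⟨u + v, add_mem hu hv, by rw [smul_add]⟩
      | neg x _ h =>
        obtain ⟨u, hu, rfl⟩ := h
        exact ⟨-u, neg_mem hu, by rw [smul_neg]⟩
    obtain ⟨y, hy, h1⟩ := key _ (hα j)
    obtain ⟨w, hw, rfl⟩ := hdiv y hy
    obtain ⟨z, hz⟩ := latL_pair Φ hΦ _ w hw _ (hα j)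
    have hr : ⟪coroot (α j), α j⟫ = 2 := by
      simp only [coroot, real_inner_smul_left]
      field_simp
    rw [h1, real_inner_smul_left, real_inner_smul_left, hz] at hr
    have hr' : (l' - l j) * ((l' - l j) * z) = 2 := by exact_mod_cast hr
    generalize l' - l j = m at hr'
    have hd : m ∣ 2 := ⟨_, hr'.symm⟩
    have hle := Int.le_of_dvd (by norm_num) hd
    have hle' := Int.le_of_dvd (by norm_num) (neg_dvd.mpr hd)
    have : -2 ≤ m := by omega
    interval_cases m <;> first | rfl | omega
  · rintro a b hab hall - ⟨γ, hγ, hγb⟩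
    rcases hall _ (hα j) with h | h
    · exfalso
      obtain ⟨y, hy, h1⟩ := key γ hγ
      rw [h] at hy hj2
      have ha : 0 < a := by
        rw [← h]
        exact real_inner_self_nonneg.lt_of_ne (by rw [h]; exact hj2.symm)
      have hb : 0 < b := ha.trans hab
      have hmem : coroot γ ∈ latL Φ a := by
        rw [h1, Int.cast_smul_eq_zsmul]
        exact zsmul_mem hy _
      obtain ⟨z, hz⟩ := latL_norm Φ hΦ a _ hmem
      rw [coroot, real_inner_smul_right, real_inner_smul_left, hγb] at hz
      have hz' : a = b * z := by
        field_simp at hz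
        linarith
      have hzpos : (0 : ℝ) < z := by
        by_contra hneg
        push Not at hneg
        nlinarith
      have : (1 : ℝ) ≤ z := by exact_mod_cast Int.cast_pos.mp hzpos
      nlinarith
    · exact h

end
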